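/- arXiv:1909.04987 — 2 statements merged into one kernel-verified Lean document; each statement's English description precedes it below -/
import Mathlib

section
/- Let S be a profinite semigroup with only finitely many regular J-classes. Then there exists a continuous homomorphism φ : S → T onto a finite semigroup T such that, for every idempotent e of T, the closed subsemigroup φ⁻¹(e) is a pro-LG semigroup. -/
/-- A bundled finite semigroup. -/
structure FinSgp : Type 1 where
  carrier : Type
  [str : Semigroup carrier]
  [fin : Finite carrier]

attribute [instance] FinSgp.str FinSgp.fin

/-- Finite semigroups carry the discrete topology. -/
instance (T : FinSgp) : TopologicalSpace T.carrier := ⊥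

instance (T : FinSgp) : DiscreteTopology T.carrier := ⟨rfl⟩

/-- A pseudovariety of finite semigroups: a class of finite semigroups closed under
homomorphic images, (isomorphic copies of) subsemigroups, and binary direct products. -/
def IsPseudovariety (V : Set FinSgp) : Prop :=
  (∀ S ∈ V, ∀ (T : FinSgp) (f : S.carrier →ₙ* T.carrier), Function.Surjective f → T ∈ V) ∧
  (∀ S ∈ V, ∀ (T : FinSgp) (f : T.carrier →ₙ* S.carrier), Function.Injective f → T ∈ V) ∧
  (∀ S ∈ V, ∀ T ∈ V, (FinSgp.mk (S.carrier × T.carrier)) ∈ V)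

/-- A profinite semigroup: a compact, Hausdorff, totally disconnected topological semigroup. -/
def IsProfiniteSgp (S : Type) [Semigroup S] [TopologicalSpace S] : Prop :=
  ContinuousMul S ∧ CompactSpace S ∧ T2Space S ∧ TotallyDisconnectedSpace S

/-- A pro-V semigroup: a profinite semigroup whose points are separated by continuous
homomorphisms onto finite semigroups belonging to V. -/
def IsProV (V : Set FinSgp) (S : Type) [Semigroup S] [TopologicalSpace S] : Prop :=
  IsProfiniteSgp S ∧ ∀ x y : S, x ≠ y →
    ∃ (T : FinSgp) (f : S →ₙ* T.carrier),
      T ∈ V ∧ Continuous f ∧ Function.Surjective f ∧ f x ≠ f y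

/-- `A` topologically generates the topological semigroup `S`. -/
def TopGen (S : Type) [Semigroup S] [TopologicalSpace S] (A : Set S) : Prop :=
  closure ((Subsemigroup.closure A : Subsemigroup S) : Set S) = Set.univ

/-- A topological semigroup is locally countable if every closed subsemigroup
topologically generated by a finite subset is countable. -/
def IsLocCountable (S : Type) [Semigroup S] [TopologicalSpace S] : Prop :=
  ∀ A : Set S, A.Finite →
    (closure ((Subsemigroup.closure A : Subsemigroup S) : Set S)).Countable

/-- A pseudovariety is locally countable if every pro-V semigroup is locally countable. -/
def PVLocallyCountable (V : Set FinSgp) : Prop :=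
  ∀ (S : Type) [Semigroup S] [TopologicalSpace S], IsProV V S → IsLocCountable S

/-- A pseudovariety is locally finite if every finitely generated pro-V semigroup is finite. -/
def PVLocallyFinite (V : Set FinSgp) : Prop :=
  ∀ (S : Type) [Semigroup S] [TopologicalSpace S], IsProV V S →
    (∃ A : Set S, A.Finite ∧ TopGen S A) → Finite S

/-- The join of two pseudovarieties: the smallest pseudovariety containing both. -/
def PVJoin (V W : Set FinSgp) : Set FinSgp :=
  ⋂₀ {U | IsPseudovariety U ∧ V ⊆ U ∧ W ⊆ U}

/-- The preimage of an idempotent under a semigroup homomorphism, as a subsemigroup. -/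
def idemFiber {S T : Type} [Semigroup S] [Semigroup T] (f : S →ₙ* T)
    (e : T) (he : e * e = e) : Subsemigroup S where
  carrier := f ⁻¹' {e}
  mul_mem' := fun {a b} ha hb => by
    simp only [Set.mem_preimage, Set.mem_singleton_iff] at ha hb ⊢
    rw [map_mul, ha, hb, he]

/-- A subsemigroup of a finite semigroup, as a bundled finite semigroup. -/
def subFinSgp {S : Type} [Semigroup S] [Finite S] (T : Subsemigroup S) : FinSgp :=
  FinSgp.mk T

/-- The generators of the Mal'cev product `V ⓜ W`: finite semigroups `S` admitting a
homomorphism onto some `T ∈ W` whose fibers over idempotents lie in `V`. -/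
def MalcevWitness (V W : Set FinSgp) (S : FinSgp) : Prop :=
  ∃ (T : FinSgp) (f : S.carrier →ₙ* T.carrier), T ∈ W ∧
    ∀ (e : T.carrier) (he : e * e = e), subFinSgp (idemFiber f e he) ∈ V

/-- The Mal'cev product of two pseudovarieties: the smallest pseudovariety containing
all its generators. -/
def Malcev (V W : Set FinSgp) : Set FinSgp :=
  ⋂₀ {U | IsPseudovariety U ∧ ∀ S : FinSgp, MalcevWitness V W S → S ∈ U}

/-- Green's preorder `≤_L`. -/
def lLE {S : Type} [Semigroup S] (u v : S) : Prop := u = v ∨ ∃ x, u = x * v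

/-- Green's relation `L`. -/
def GreenL {S : Type} [Semigroup S] (u v : S) : Prop := lLE u v ∧ lLE v u

/-- Green's preorder `≤_J`. -/
def jLE {S : Type} [Semigroup S] (u v : S) : Prop :=
  u = v ∨ (∃ x, u = v * x) ∨ (∃ x, u = x * v) ∨ (∃ x y, u = x * v * y)

/-- Green's relation `J`. -/
def GreenJ {S : Type} [Semigroup S] (u v : S) : Prop := jLE u v ∧ jLE v u

/-- A regular element of a semigroup. -/
def IsRegularElt {S : Type} [Semigroup S] (s : S) : Prop := ∃ t, s = s * t * s

/-- `S` has only finitely many regular `J`-classes. -/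
def FinManyRegJ (S : Type) [Semigroup S] : Prop :=
  ∃ F : Set S, F.Finite ∧ ∀ s : S, IsRegularElt s → ∃ t ∈ F, GreenJ s t

/-- A subgroup of a semigroup: a subsemigroup which is a group under the induced
multiplication. -/
def IsSgpSubgroup (S : Type) [Semigroup S] (G : Set S) : Prop :=
  (∀ x ∈ G, ∀ y ∈ G, x * y ∈ G) ∧
  ∃ e ∈ G, (∀ x ∈ G, e * x = x ∧ x * e = x) ∧ (∀ x ∈ G, ∃ y ∈ G, x * y = e ∧ y * x = e)

/-- A group element of a semigroup: an element lying in some subgroup. -/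
def IsGroupElt (S : Type) [Semigroup S] (s : S) : Prop :=
  ∃ G : Set S, IsSgpSubgroup S G ∧ s ∈ G

/-- `prodFrom f n` is the product `f 0 * f 1 * ⋯ * f n`. -/
def prodFrom {S : Type} [Semigroup S] (f : ℕ → S) : ℕ → S
  | 0 => f 0
  | n + 1 => prodFrom f n * f (n + 1)

/-- A semigroup is nilpotent if it has a zero element and some length bound beyond
which all products equal zero. -/
def IsNilpotentSgp (S : Type) [Semigroup S] : Prop :=
  ∃ z : S, (∀ x : S, z * x = z ∧ x * z = z) ∧ ∃ n : ℕ, ∀ f : ℕ → S, prodFrom f n = z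

/-- The pseudovariety `N` of finite nilpotent semigroups. -/
def NPv : Set FinSgp := {S | IsNilpotentSgp S.carrier}

/-- A semigroup which is a group. -/
def IsGroupSgp (S : Type) [Semigroup S] : Prop :=
  ∃ e : S, (∀ x : S, e * x = x ∧ x * e = x) ∧ ∀ x : S, ∃ y : S, x * y = e ∧ y * x = e

/-- The pseudovariety `LG` of finite local groups: `eSe` is a group for each idempotent `e`. -/
def LG : Set FinSgp :=
  {S | ∀ e : S.carrier, e * e = e → ∀ s : S.carrier,
      ∃ t : S.carrier, (e * s * e) * (e * t * e) = e ∧ (e * t * e) * (e * s * e) = e}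

/-- The pseudovariety `IE` of finite semigroups with exactly one idempotent. -/
def IE : Set FinSgp := {S | ∃! e : S.carrier, e * e = e}

/-- A bundled topological semigroup (carrier, multiplication, topology). -/
structure TopSgp : Type 1 where
  carrier : Type
  [str : Semigroup carrier]
  [top : TopologicalSpace carrier]

attribute [instance] TopSgp.str TopSgp.top

/-- The fiber of a relational morphism over an idempotent, as a subsemigroup of the
domain. -/
def relFiber {S T : Type} [Semigroup S] [Semigroup T] (μ : Subsemigroup (S × T))
    (e : T) (he : e * e = e) : Subsemigroup S where
  carrier := {s | (s, e) ∈ μ}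
  mul_mem' := fun {a b} ha hb => by
    have h := μ.mul_mem ha hb
    simpa [Prod.mk_mul_mk, he] using h

/-- `spow x n = x ^ (n + 1)` in a semigroup. -/
def spow {S : Type} [Semigroup S] (x : S) : ℕ → S
  | 0 => x
  | n + 1 => spow x n * x

/-- The pseudovariety `A ∩ ESl` of finite aperiodic semigroups with commuting idempotents. -/
def AESl : Set FinSgp :=
  {S | (∃ n : ℕ, ∀ x : S.carrier, spow x (n + 1) = spow x n) ∧
       (∀ e f : S.carrier, e * e = e → f * f = f → e * f = f * e)}

/-!
The principal ideals of a compact semigroup are closed, so in a profinite semigroup an element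
outside such an ideal is separated from it by a congruence with open classes, namely the syntactic
congruence of a clopen set. Intersecting finitely many of these, one for each pair of
representatives of regular `J`-classes, gives a finite quotient in which only `J`-equivalent
idempotents are identified. Compact semigroups are stable, so distinct `J`-equivalent idempotents
are incomparable in the natural order. Hence for an idempotent `f` of a fiber `U`, the only
idempotent of the compact monoid `f U f` is `f`, which makes `f U f` a group; as idempotents lift
along continuous surjections, every finite continuous image of `U` lies in `LG`.
-/

/-! ### Green's preorder in compact semigroups -/

theorem jLE_iff_exists_withOne {S : Type} [Semigroup S] {u v : S} :
    jLE u v ↔ ∃ a b : WithOne S, (u : WithOne S) = a * v * b := by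
  simp only [jLE, WithOne.exists, one_mul, mul_one, ← WithOne.coe_mul, WithOne.coe_inj,
    exists_or, or_assoc]
  tauto

theorem jLE.trans {S : Type} [Semigroup S] {u v w : S} (huv : jLE u v) (hvw : jLE v w) :
    jLE u w := by
  rw [jLE_iff_exists_withOne] at *
  obtain ⟨a, b, hu⟩ := huv
  obtain ⟨c, d, hv⟩ := hvw
  exact ⟨a * c, d * b, by simp only [hu, hv, mul_assoc]⟩

theorem jLE.exists_eq_mul_mul {S : Type} [Semigroup S] {u v : S} (h : jLE u v)
    (hv : IsIdempotentElem v) : ∃ x y, u = x * v * y := by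
  rcases h with rfl | ⟨x, rfl⟩ | ⟨x, rfl⟩ | h
  · exact ⟨u, u, by rw [hv.eq, hv.eq]⟩
  · exact ⟨v, x, by rw [hv.eq]⟩
  · exact ⟨x, v, by rw [mul_assoc, hv.eq]⟩
  · exact h

theorem isClosed_setOf_jLE {S : Type} [Semigroup S] [TopologicalSpace S] [ContinuousMul S]
    [CompactSpace S] [T2Space S] (v : S) : IsClosed {u | jLE u v} := by
  have ideal_eq : {u | jLE u v} = {v} ∪ (Set.range (v * ·) ∪ (Set.range (· * v) ∪
      Set.range fun p : S × S => p.1 * v * p.2)) := by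
    ext u
    simp [jLE, eq_comm]
  rw [ideal_eq]
  refine isClosed_singleton.union (.union ?_ (.union ?_ ?_)) <;>
    exact (isCompact_range (by fun_prop)).isClosed

/-- Stability of compact semigroups: the pairs `(p, q)` with `p * x * q = x` and `q ∈ b * S` form a
closed subsemigroup of `S × Sᵐᵒᵖ`, and an idempotent `(p, q)` of it satisfies `x * q = x`. -/
theorem exists_mul_mul_eq_of_mul_mul_eq {S : Type*} [Semigroup S] [TopologicalSpace S]
    [ContinuousMul S] [CompactSpace S] [T2Space S] {a b x : S} (h : a * x * b = x) :
    ∃ c, x * b * c = x := by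
  let P : Set (S × Sᵐᵒᵖ) := {r | r.1 * x * r.2.unop = x ∧ r.2.unop ∈ Set.range (b * ·)}
  have isCompact_P : IsCompact P := by
    refine IsClosed.isCompact (.inter (isClosed_eq (by fun_prop) continuous_const) ?_)
    exact (isCompact_range (by fun_prop)).isClosed.preimage (by fun_prop)
  have mem_P : (a * a, MulOpposite.op (b * b)) ∈ P := by
    refine ⟨?_, b, rfl⟩
    calc a * a * x * (b * b) = a * (a * x * b) * b := by simp only [mul_assoc]
      _ = x := by rw [h, h]
  have mul_mem_P : ∀ᵉ (r ∈ P) (r' ∈ P), r * r' ∈ P := by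
    rintro ⟨p, q⟩ ⟨hpq, -⟩ ⟨p', q'⟩ ⟨hpq', c', hc'⟩
    refine ⟨?_, c' * q.unop, ?_⟩
    · calc p * p' * x * (q'.unop * q.unop) = p * (p' * x * q'.unop) * q.unop := by
            simp only [mul_assoc]
        _ = x := by rw [hpq', hpq]
    · exact (mul_assoc b c' q.unop).symm.trans (congrArg (· * q.unop) hc')
  obtain ⟨⟨p, q⟩, ⟨hpq, c, hc⟩, hidem⟩ := exists_idempotent_in_compact_subsemigroup
    (fun r => by fun_prop) P ⟨_, mem_P⟩ isCompact_P mul_mem_P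
  have hq : q.unop * q.unop = q.unop := congrArg (fun r : S × Sᵐᵒᵖ => r.2.unop) hidem
  refine ⟨c, ?_⟩
  calc x * b * c = x * q.unop := by rw [mul_assoc, ← hc]
    _ = p * x * (q.unop * q.unop) := by rw [← mul_assoc, hpq]
    _ = x := by rw [hq, hpq]

theorem jLE.eq_of_mul_eq {S : Type} [Semigroup S] [TopologicalSpace S] [ContinuousMul S]
    [CompactSpace S] [T2Space S] {f g : S} (h : jLE f g) (hg : IsIdempotentElem g)
    (hfg : f * g = g) (hgf : g * f = g) : g = f := by
  obtain ⟨x, y, hxy⟩ := h.exists_eq_mul_mul hg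
  obtain ⟨c, hc⟩ : ∃ c, f * (g * y) * c = f := by
    refine exists_mul_mul_eq_of_mul_mul_eq (a := x) ?_
    rw [mul_assoc, ← mul_assoc f, hfg, ← mul_assoc, ← hxy]
  have hf : f = g * (y * c) := by rw [← mul_assoc, ← hfg, mul_assoc f, hc]
  calc g = g * f := hgf.symm
    _ = g * (g * (y * c)) := by rw [← hf]
    _ = f := by rw [← mul_assoc, hg.eq, ← hf]

/-! ### Congruences with open classes -/

/-- A congruence on a topological semigroup whose classes are open. On a compact semigroup these
are exactly the kernels of the continuous homomorphisms to finite discrete semigroups. -/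
def IsOpenCon {S : Type*} [Mul S] [TopologicalSpace S] (c : Con S) : Prop :=
  ∀ a, IsOpen {b | c a b}

namespace IsOpenCon

theorem top {S : Type*} [Mul S] [TopologicalSpace S] : IsOpenCon (⊤ : Con S) :=
  fun _ => isOpen_const

theorem iInf {S : Type*} [Mul S] [TopologicalSpace S] {ι : Type*} [Finite ι] {c : ι → Con S}
    (hc : ∀ i, IsOpenCon (c i)) : IsOpenCon (⨅ i, c i) := by
  intro a
  simp only [Con.coe_iInf, iInf_apply, iInf_Prop_eq, Set.ofPred_forall]
  exact isOpen_iInter_of_finite fun i => hc i a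

theorem exists_finSgp {S : Type} [Semigroup S] [TopologicalSpace S] [CompactSpace S] {c : Con S}
    (hc : IsOpenCon c) :
    ∃ (T : FinSgp) (p : S →ₙ* T.carrier), Continuous p ∧ Function.Surjective p ∧
      ∀ a b, p a = p b ↔ c a b := by
  have finite_quotient (q : DiscreteQuotient S) : Finite q := inferInstance
  have : Finite c.Quotient := finite_quotient ⟨c.toSetoid, hc⟩
  obtain ⟨T, p, hsurj, p_eq_iff⟩ : ∃ (T : FinSgp) (p : S →ₙ* T.carrier),
      Function.Surjective p ∧ ∀ a b, p a = p b ↔ c a b :=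
    ⟨.mk c.Quotient, ⟨fun a => (a : c.Quotient), fun _ _ => rfl⟩, Quotient.mk_surjective,
      fun _ _ => c.eq⟩
  refine ⟨T, p, ?_, hsurj, p_eq_iff⟩
  refine (IsLocallyConstant.iff_isOpen_fiber_apply.2 fun a => ?_).continuous
  simpa only [Set.preimage, Set.mem_singleton_iff, eq_comm (b := p a), p_eq_iff] using hc a

end IsOpenCon

/-- The syntactic congruence of a subset `K`: two elements are related when no context `u * _ * v`,
with either side possibly empty, distinguishes them by membership in `K`. -/
def syntacticCon {S : Type*} [Semigroup S] (K : Set S) : Con S where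
  r x y := ∀ u v : WithOne S, u * x * v ∈ WithOne.coe '' K ↔ u * y * v ∈ WithOne.coe '' K
  iseqv := ⟨fun _ _ _ => .rfl, fun h u v => (h u v).symm, fun h h' u v => (h u v).trans (h' u v)⟩
  mul' {w x y z} hwx hyz u v := by
    have hw := hwx u (y * v)
    have hy := hyz (u * x) v
    simp only [WithOne.coe_mul, mul_assoc] at hw hy ⊢
    exact hw.trans hy

theorem syntacticCon_iff {S : Type*} [Semigroup S] {K : Set S} {x y : S} :
    syntacticCon K x y ↔ ((x ∈ K ↔ y ∈ K) ∧ ∀ u, u * x ∈ K ↔ u * y ∈ K) ∧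
      (∀ v, x * v ∈ K ↔ y * v ∈ K) ∧ ∀ p : S × S, p.1 * x * p.2 ∈ K ↔ p.1 * y * p.2 ∈ K := by
  change (∀ u v : WithOne S, _) ↔ _
  simp only [WithOne.forall, one_mul, mul_one, ← WithOne.coe_mul,
    WithOne.coe_injective.mem_set_image, forall_and, Prod.forall]

theorem isOpen_setOf_forall_mem_iff {X Y Z : Type*} [TopologicalSpace X] [TopologicalSpace Y]
    [TopologicalSpace Z] [CompactSpace Y] {K : Set Z} (hK : IsClopen K) {g : X → Y → Z}
    (hg : Continuous (Function.uncurry g)) (x : X) :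
    IsOpen {x' | ∀ y, g x y ∈ K ↔ g x' y ∈ K} := by
  let G : C(X, C(Y, Z)) := ContinuousMap.curry ⟨_, hg⟩
  have isOpen_mapsTo {L : Set Z} (hL : IsClopen L) :
      IsOpen {x' | Set.MapsTo (g x') (g x ⁻¹' L) L} :=
    (ContinuousMap.isClopen_setOfPred_mapsTo
      (hL.isClosed.preimage (G x).continuous).isCompact hL).isOpen.preimage G.continuous
  convert (isOpen_mapsTo hK).inter (isOpen_mapsTo hK.compl) using 1
  ext x'
  simp only [Set.MapsTo, Set.mem_preimage, Set.mem_compl_iff, Set.mem_inter_iff,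
    Set.mem_ofPred_eq, ← forall_and, not_imp_not, iff_def]

theorem isOpenCon_syntacticCon {S : Type*} [Semigroup S] [TopologicalSpace S] [ContinuousMul S]
    [CompactSpace S] {K : Set S} (hK : IsClopen K) : IsOpenCon (syntacticCon K) := by
  intro x
  have isOpen_mem_iff := isOpen_setOf_forall_mem_iff hK
    (g := fun y (_ : Unit) => y) (by fun_prop) x
  simp only [forall_const] at isOpen_mem_iff
  have isOpen_left := isOpen_setOf_forall_mem_iff hK (g := fun y u : S => u * y) (by fun_prop) x
  have isOpen_right := isOpen_setOf_forall_mem_iff hK (g := fun y v : S => y * v) (by fun_prop) x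
  have isOpen_both := isOpen_setOf_forall_mem_iff hK
    (g := fun y (p : S × S) => p.1 * y * p.2) (by fun_prop) x
  simp only [syntacticCon_iff, Set.ofPred_and]
  exact (isOpen_mem_iff.inter isOpen_left).inter (isOpen_right.inter isOpen_both)

theorem exists_isOpenCon_forall_not_rel {S : Type*} [Semigroup S] [TopologicalSpace S]
    [ContinuousMul S] [CompactSpace S] [T2Space S] [TotallyDisconnectedSpace S] {C : Set S}
    (hC : IsClosed C) {x : S} (hx : x ∉ C) : ∃ c : Con S, IsOpenCon c ∧ ∀ w ∈ C, ¬ c x w := by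
  obtain ⟨K, hK, hxK, hKC⟩ := compact_exists_isClopen_in_isOpen hC.isOpen_compl hx
  exact ⟨syntacticCon K, isOpenCon_syntacticCon hK,
    fun w hw h => hKC ((syntacticCon_iff.1 h).1.1.1 hxK) hw⟩

theorem exists_isOpenCon_reflecting_jLE {S : Type} [Semigroup S] [TopologicalSpace S]
    [ContinuousMul S] [CompactSpace S] [T2Space S] [TotallyDisconnectedSpace S] {F : Set S}
    (hF : F.Finite) :
    ∃ c : Con S, IsOpenCon c ∧ ∀ s ∈ F, ∀ t ∈ F, ∀ w, c s w → jLE w t → jLE s t := by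
  have : Finite F := hF
  have exists_con : ∀ i : F × F, ∃ c : Con S, IsOpenCon c ∧
      ∀ w, c i.1 w → jLE w i.2 → jLE (i.1 : S) i.2 := by
    intro i
    by_cases h : jLE (i.1 : S) i.2
    · exact ⟨⊤, .top, fun _ _ _ => h⟩
    · obtain ⟨c, hc, hsep⟩ := exists_isOpenCon_forall_not_rel (isClosed_setOf_jLE (i.2 : S)) h
      exact ⟨c, hc, fun w hw hwt => absurd hw (hsep w hwt)⟩
  choose c hc hreflect using exists_con
  refine ⟨⨅ i, c i, .iInf hc, fun s hs t ht w hw => hreflect (⟨s, hs⟩, ⟨t, ht⟩) w ?_⟩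
  simp only [Con.coe_iInf, iInf_apply, iInf_Prop_eq] at hw
  exact hw _

theorem FinManyRegJ.exists_isOpenCon {S : Type} [Semigroup S] [TopologicalSpace S]
    [ContinuousMul S] [CompactSpace S] [T2Space S] [TotallyDisconnectedSpace S]
    (hJ : FinManyRegJ S) :
    ∃ c : Con S, IsOpenCon c ∧
      ∀ e f, IsIdempotentElem e → IsIdempotentElem f → c e f → jLE e f := by
  obtain ⟨F, hF, hJF⟩ := hJ
  obtain ⟨c, hc, hreflect⟩ := exists_isOpenCon_reflecting_jLE hF
  refine ⟨c, hc, fun e f he hf hef => ?_⟩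
  obtain ⟨s, hs, hes, hse⟩ := hJF e ⟨e, by rw [he.eq, he.eq]⟩
  obtain ⟨t, ht, hft, htf⟩ := hJF f ⟨f, by rw [hf.eq, hf.eq]⟩
  obtain ⟨x, y, rfl⟩ := hse.exists_eq_mul_mul he
  have hrel : c (x * e * y) (x * f * y) := c.mul (c.mul (c.refl x) hef) (c.refl y)
  have hxfy : jLE (x * f * y) f := .inr (.inr (.inr ⟨x, y, rfl⟩))
  exact (hes.trans (hreflect _ hs t ht _ hrel (hxfy.trans hft))).trans htf

/-! ### Pairwise incomparable idempotents and `LG` -/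

/-- No two distinct idempotents are comparable in the natural order `g ≤ f ↔ f * g = g = g * f`;
for finite semigroups this characterizes membership in `LG`. -/
def IdempotentsIncomparable (S : Type*) [Semigroup S] : Prop :=
  ∀ ⦃f g : S⦄, IsIdempotentElem f → IsIdempotentElem g → f * g = g → g * f = g → g = f

theorem isUnit_of_forall_isIdempotentElem_eq_one {M : Type*} [Monoid M] [TopologicalSpace M]
    [ContinuousMul M] [CompactSpace M] [T2Space M] (h : ∀ e : M, IsIdempotentElem e → e = 1)
    (x : M) : IsUnit x := by
  have exists_right_inv (y : M) : ∃ z, y * z = 1 := by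
    obtain ⟨_, ⟨z, rfl⟩, hz⟩ := exists_idempotent_in_compact_subsemigroup
      (fun r => by fun_prop) (Set.range (y * ·)) (Set.range_nonempty _)
      (isCompact_range (by fun_prop)) (by
        rintro _ ⟨z, rfl⟩ _ ⟨z', rfl⟩
        exact ⟨z * (y * z'), (mul_assoc y z _).symm⟩)
    exact ⟨z, h _ hz⟩
  obtain ⟨y, hxy⟩ := exists_right_inv x
  obtain ⟨z, hyz⟩ := exists_right_inv y
  exact isUnit_iff_exists.2 ⟨y, hxy, left_inv_eq_right_inv hxy hyz ▸ hyz⟩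

/-- The monoid structure on the corner `e S e` of an idempotent `e`, with identity `e`. -/
abbrev cornerMonoid {S : Type*} [Semigroup S] {e : S} (he : IsIdempotentElem e) :
    Monoid (Subsemigroup.corner e) where
  one := ⟨e, (Subsemigroup.mem_corner_iff he).2 ⟨he, he⟩⟩
  one_mul r := Subtype.ext ((Subsemigroup.mem_corner_iff he).1 r.2).1
  mul_one r := Subtype.ext ((Subsemigroup.mem_corner_iff he).1 r.2).2

theorem exists_idempotent_map_eq {S T : Type*} [Semigroup S] [TopologicalSpace S]
    [ContinuousMul S] [CompactSpace S] [T2Space S] [Semigroup T] [TopologicalSpace T]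
    [T1Space T] {p : S →ₙ* T} (hp : Continuous p) (hsurj : Function.Surjective p) {e : T}
    (he : IsIdempotentElem e) : ∃ f, IsIdempotentElem f ∧ p f = e := by
  obtain ⟨f, hfe, hf⟩ := exists_idempotent_in_compact_subsemigroup (fun r => by fun_prop)
    (p ⁻¹' {e}) (hsurj e) (isClosed_singleton.preimage hp).isCompact (by
      rintro a rfl b hb
      exact (map_mul p a b).trans (hb ▸ he))
  exact ⟨f, hf, hfe⟩

namespace IdempotentsIncomparable

theorem exists_corner_inverse {S : Type*} [Semigroup S] [TopologicalSpace S] [ContinuousMul S]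
    [CompactSpace S] [T2Space S] (hS : IdempotentsIncomparable S) {e : S}
    (he : IsIdempotentElem e) (s : S) :
    ∃ t, e * s * e * (e * t * e) = e ∧ e * t * e * (e * s * e) = e := by
  let := cornerMonoid he
  have : CompactSpace (Subsemigroup.corner e) :=
    isCompact_iff_compactSpace.1 (isCompact_range (by fun_prop))
  have eq_one (g : Subsemigroup.corner e) (hg : IsIdempotentElem g) : g = 1 :=
    have ⟨heg, hge⟩ := (Subsemigroup.mem_corner_iff he).1 g.2
    Subtype.ext (hS he (congrArg Subtype.val hg) heg hge)
  obtain ⟨⟨_, t, rfl⟩, hst, hts⟩ := isUnit_iff_exists.1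
    (isUnit_of_forall_isIdempotentElem_eq_one eq_one ⟨e * s * e, s, rfl⟩)
  exact ⟨t, congrArg Subtype.val hst, congrArg Subtype.val hts⟩

theorem mem_LG_of_surjective {S : Type*} [Semigroup S] [TopologicalSpace S] [ContinuousMul S]
    [CompactSpace S] [T2Space S] (hS : IdempotentsIncomparable S) {T : FinSgp}
    {p : S →ₙ* T.carrier} (hp : Continuous p) (hsurj : Function.Surjective p) : T ∈ LG := by
  intro e he s
  obtain ⟨f, hf, rfl⟩ := exists_idempotent_map_eq hp hsurj he
  obtain ⟨s, rfl⟩ := hsurj s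
  obtain ⟨t, hst, hts⟩ := hS.exists_corner_inverse hf s
  exact ⟨p t, by simp only [← map_mul, hst], by simp only [← map_mul, hts]⟩

theorem isProV_LG {S : Type} [Semigroup S] [TopologicalSpace S]
    (hS : IdempotentsIncomparable S) (hprof : IsProfiniteSgp S) : IsProV LG S := by
  refine ⟨hprof, fun x y hxy => ?_⟩
  obtain ⟨_, _, _, _⟩ := hprof
  obtain ⟨c, hc, hsep⟩ := exists_isOpenCon_forall_not_rel (isClosed_singleton (x := y)) hxy
  obtain ⟨T, p, hp, hsurj, p_eq_iff⟩ := hc.exists_finSgp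
  exact ⟨T, p, hS.mem_LG_of_surjective hp hsurj, hp, hsurj,
    fun h => hsep y rfl ((p_eq_iff x y).1 h)⟩

end IdempotentsIncomparable

theorem IsProfiniteSgp.of_isClosed {S : Type} [Semigroup S] [TopologicalSpace S]
    (hS : IsProfiniteSgp S) {H : Subsemigroup S} (hH : IsClosed (H : Set S)) :
    IsProfiniteSgp H := by
  obtain ⟨_, _, _, _⟩ := hS
  exact ⟨inferInstance, isCompact_iff_compactSpace.1 hH.isCompact, inferInstance, inferInstance⟩

/-- A profinite semigroup with finitely many regular `J`-classes admits a
continuous homomorphism onto a finite semigroup whose fibers over idempotents are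
pro-`LG`. -/
theorem finManyRegJ_onto_finite_with_proLG_fibers
    (S : Type) [Semigroup S] [TopologicalSpace S] (hS : IsProfiniteSgp S)
    (hJ : FinManyRegJ S) :
    ∃ (T : FinSgp) (f : S →ₙ* T.carrier), Continuous f ∧ Function.Surjective f ∧
      ∀ (e : T.carrier) (he : e * e = e), IsProV LG ↥(idemFiber f e he) := by
  obtain ⟨_, _, _, _⟩ := id hS
  obtain ⟨c, hc, jLE_of_rel⟩ := hJ.exists_isOpenCon
  obtain ⟨T, p, hp, hsurj, p_eq_iff⟩ := hc.exists_finSgp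
  refine ⟨T, p, hp, hsurj, fun e he => IdempotentsIncomparable.isProV_LG ?_ ?_⟩
  · rintro ⟨f, hfe⟩ ⟨g, hge⟩ hf hg hfg hgf
    simp only [IsIdempotentElem, MulMemClass.mk_mul_mk, Subtype.mk.injEq] at hf hg hfg hgf ⊢
    have hrel : c f g := (p_eq_iff f g).1 (hfe.trans hge.symm)
    exact (jLE_of_rel f g hf hg hrel).eq_of_mul_eq hg hfg hgf
  · exact hS.of_isClosed (isClosed_singleton.preimage hp)
end

section
/- The pseudovariety A ∩ ESl, consisting of all finite aperiodic semigroups whose idempotents commute, is not locally countable: there exists an uncountable pro-(A ∩ ESl) semigroup that is topologically generated by a two-element subset. -/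
/-!
A word over `{true, false}` acts on the states of a bideterministic automaton by a partial
bijection, and idempotent partial bijections commute. Given letters `a ≠ b`, replace every edge
labelled `c` by a path labelled `a c b`. A word of length prime to `3` labels no cycle, since along
its iterates its first letter would be read at all three positions of such paths and so be both
`a` and `b`; a word of length divisible by `3` preserves positions and acts at each of them as an
element of the old transition monoid. Hence aperiodicity is preserved. Iterating with
`(a, b) = (i, !i)` along a word `p` of choices gives an automaton whose transition monoid separates
the iterated substitutions `c ↦ i c (!i)` as soon as their choices depart from `p`. In the closed
semigroup generated by the two letters in the product of all these monoids, the closures of the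
sets of iterated substitutions with prescribed first choices therefore form a Cantor scheme.
-/

section Pseudovariety

theorem spow_eq_pow {M : Type} [Monoid M] (x : M) (n : ℕ) : spow x n = x ^ (n + 1) := by
  induction n with
  | zero => rw [spow, pow_one]
  | succ n ih => rw [spow, ih, ← pow_succ]

theorem map_spow {S T : Type} [Semigroup S] [Semigroup T] (f : S →ₙ* T) (x : S) (n : ℕ) :
    f (spow x n) = spow (f x) n := by
  induction n with
  | zero => rfl
  | succ n ih => rw [spow, map_mul, ih, spow]

theorem mem_AESl_of_injective {S T : FinSgp} (hS : S ∈ AESl) (f : T.carrier →ₙ* S.carrier)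
    (hf : Function.Injective f) : T ∈ AESl := by
  obtain ⟨⟨n, hn⟩, hcomm⟩ := hS
  refine ⟨⟨n, fun x => hf ?_⟩, fun d e hd he => hf ?_⟩
  · rw [map_spow, map_spow, hn]
  · rw [map_mul, map_mul, hcomm (f d) (f e) (by rw [← map_mul, hd]) (by rw [← map_mul, he])]

theorem isProV_of_isClosed {V : Set FinSgp}
    (hV : ∀ S ∈ V, ∀ (T : FinSgp) (f : T.carrier →ₙ* S.carrier), Function.Injective f → T ∈ V)
    {ι : Type} {T : ι → FinSgp} (hT : ∀ i, T i ∈ V) {S : Subsemigroup (∀ i, (T i).carrier)}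
    (hS : IsClosed (S : Set (∀ i, (T i).carrier))) : IsProV V S := by
  have : CompactSpace S := isCompact_iff_compactSpace.mp hS.isCompact
  refine ⟨⟨inferInstance, inferInstance, inferInstance, inferInstance⟩, fun x y hxy => ?_⟩
  obtain ⟨i, hi⟩ := Function.ne_iff.mp (Subtype.coe_ne_coe.mpr hxy)
  let π : S →ₙ* (T i).carrier := (Pi.evalMulHom _ i).comp (MulMemClass.subtype S)
  have hπ : Continuous π := (continuous_apply i).comp continuous_subtype_val
  refine ⟨subFinSgp π.srange, π.srangeRestrict,
    hV _ (hT i) _ (MulMemClass.subtype π.srange) Subtype.val_injective, ?_,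
    π.srangeRestrict_surjective, fun h => hi (congrArg Subtype.val h)⟩
  exact continuous_discrete_rng.mpr fun z => by
    convert (isOpen_discrete {z.1}).preimage hπ using 1
    ext s
    exact Subtype.ext_iff

theorem topGen_topologicalClosure {G : Type} [Semigroup G] [TopologicalSpace G] [ContinuousMul G]
    (A : Set G) :
    TopGen (Subsemigroup.closure A).topologicalClosure (Subtype.val ⁻¹' A) := by
  set S := (Subsemigroup.closure A).topologicalClosure
  have hA : A ⊆ Set.range (MulMemClass.subtype S) := fun x hx =>
    ⟨⟨x, Subsemigroup.le_topologicalClosure _ (Subsemigroup.subset_closure hx)⟩, rfl⟩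
  have himage : Subtype.val ''
      (Subsemigroup.closure (Subtype.val ⁻¹' A : Set S) : Set S) = Subsemigroup.closure A := by
    change MulMemClass.subtype S '' _ = _
    rw [← Subsemigroup.coe_map, MulHom.map_mclosure]
    exact congrArg (fun B => (Subsemigroup.closure B : Set G)) (Set.image_preimage_eq_of_subset hA)
  refine Set.eq_univ_of_forall fun x => closure_subtype.mpr ?_
  rw [himage]
  exact x.2

theorem not_pvLocallyCountable {V : Set FinSgp} {S : Type} [Semigroup S] [TopologicalSpace S]
    (hS : IsProV V S) (hunc : ¬ Countable S) {A : Set S} (hA : A.Finite) (hgen : TopGen S A) :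
    ¬ PVLocallyCountable V := fun h => by
  have hcount := h S hS A hA
  rw [hgen, Set.countable_univ_iff] at hcount
  exact hunc hcount

end Pseudovariety

theorem not_countable_of_cantorScheme {X : Type*} [TopologicalSpace X] [CompactSpace X]
    {A : List Bool → Set X} (hclosed : ∀ l, IsClosed (A l)) (hne : ∀ l, (A l).Nonempty)
    (hanti : CantorScheme.Antitone A) (hdisj : CantorScheme.Disjoint A) : ¬ Countable X := by
  have hdom : ∀ x : ℕ → Bool, x ∈ (CantorScheme.inducedMap A).1 := fun x =>
    IsCompact.nonempty_iInter_of_sequence_nonempty_isCompact_isClosed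
      (fun n => A (PiNat.res x n)) (fun n => hanti (PiNat.res x n) (x n)) (fun n => hne _)
      (hclosed _).isCompact (fun n => hclosed _)
  have hinj : Function.Injective fun x : ℕ → Bool => (CantorScheme.inducedMap A).2 ⟨x, hdom x⟩ :=
    fun x y h => congrArg Subtype.val (hdisj.map_injective h)
  have : Uncountable (ℕ → Bool) := Cardinal.aleph0_lt_mk_iff.mp (by
    simpa using Cardinal.cantor Cardinal.aleph0)
  exact hinj.uncountable.not_countable

theorem exists_add_nsmul_eq {p : ℕ} [Fact p.Prime] {l : ZMod p} (hl : l ≠ 0) (j i : ZMod p) :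
    ∃ n : ℕ, j + n • l = i :=
  ⟨((i - j) / l).val, by
    rw [nsmul_eq_mul, ZMod.natCast_zmod_val, div_mul_cancel₀ _ hl, add_sub_cancel]⟩

section PartialBijections

variable {Q J : Type*}

/-- The symmetric inverse monoid of partial bijections of `Q`, acting on the right: `f * g` is
`f` followed by `g`. -/
instance : MonoidWithZero (Q ≃. Q) where
  mul := PEquiv.trans
  one := PEquiv.refl Q
  zero := ⊥
  mul_assoc := PEquiv.trans_assoc
  one_mul := PEquiv.refl_trans
  mul_one := PEquiv.trans_refl
  zero_mul := PEquiv.bot_trans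
  mul_zero := PEquiv.trans_bot

instance [Finite Q] : Finite (Q ≃. Q) := Finite.of_injective _ DFunLike.coe_injective

theorem pequiv_mul_apply (f g : Q ≃. Q) (q : Q) : (f * g) q = (f q).bind g := rfl

theorem pequiv_one_apply (q : Q) : (1 : Q ≃. Q) q = some q := rfl

theorem pequiv_zero_apply (q : Q) : (0 : Q ≃. Q) q = none := rfl

theorem pequiv_eq_of_isIdempotentElem {e : Q ≃. Q} (he : IsIdempotentElem e) {q r : Q}
    (hr : e q = some r) : q = r := by
  have hee : (e q).bind e = some r := by rw [← pequiv_mul_apply, he, hr]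
  rw [hr, Option.bind_some] at hee
  exact e.inj hr hee

theorem pequiv_mul_apply_eq_some_iff_of_isIdempotentElem {e f : Q ≃. Q} (he : IsIdempotentElem e)
    (hf : IsIdempotentElem f) {q r : Q} :
    (e * f) q = some r ↔ e q = some r ∧ f q = some r := by
  rw [pequiv_mul_apply, Option.bind_eq_some_iff]
  constructor
  · rintro ⟨s, hs, hr⟩
    obtain rfl := pequiv_eq_of_isIdempotentElem he hs
    obtain rfl := pequiv_eq_of_isIdempotentElem hf hr
    exact ⟨hs, hr⟩
  · rintro ⟨hs, hr⟩
    obtain rfl := pequiv_eq_of_isIdempotentElem he hs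
    exact ⟨q, hs, hr⟩

theorem pequiv_commute_of_isIdempotentElem {e f : Q ≃. Q} (he : IsIdempotentElem e)
    (hf : IsIdempotentElem f) : Commute e f :=
  PEquiv.ext fun q => Option.ext fun r => by
    rw [pequiv_mul_apply_eq_some_iff_of_isIdempotentElem he hf,
      pequiv_mul_apply_eq_some_iff_of_isIdempotentElem hf he, and_comm]

/-- A partial bijection all of whose cycles are fixed points. -/
def CycleFree (g : Q ≃. Q) : Prop :=
  ∀ (q : Q) (k : ℕ), k ≠ 0 → (g ^ k) q = some q → g q = some q

theorem cycleFree_zero : CycleFree (0 : Q ≃. Q) := fun q k hk h => by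
  rw [zero_pow hk, pequiv_zero_apply] at h
  cases h

theorem cycleFree_one : CycleFree (1 : Q ≃. Q) := fun _ _ _ _ => rfl

theorem pequiv_pow_apply_of_apply_eq {g : Q ≃. Q} {q : Q} (h : g q = some q) (n : ℕ) :
    (g ^ n) q = some q := by
  induction n with
  | zero => rfl
  | succ n ih => rw [pow_succ, pequiv_mul_apply, ih, Option.bind_some, h]

theorem pequiv_pow_apply_ne_none {g : Q ≃. Q} {q : Q} {k : ℕ} (hk : k ≠ 0)
    (h : (g ^ k) q = some q) (n : ℕ) : (g ^ n) q ≠ none := fun hn => by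
  obtain ⟨d, hd⟩ := Nat.exists_eq_add_of_le (Nat.le_mul_of_pos_left n (Nat.pos_of_ne_zero hk))
  have hkn := pequiv_pow_apply_of_apply_eq h n
  rw [← pow_mul, hd, pow_add, pequiv_mul_apply, hn] at hkn
  cases hkn

theorem CycleFree.pow_succ_eq {g : Q ≃. Q} (hg : CycleFree g) {m k : ℕ} (hk : k ≠ 0)
    (h : g ^ (m + k) = g ^ m) : g ^ (m + 1) = g ^ m := by
  refine PEquiv.ext fun q => ?_
  rw [pow_succ, pequiv_mul_apply]
  cases hq : (g ^ m) q with
  | none => rfl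
  | some r =>
    have hcycle : (g ^ (m + k)) q = some r := by rw [h, hq]
    rw [pow_add, pequiv_mul_apply, hq] at hcycle
    exact hg r k hk hcycle

theorem exists_forall_pow_add_eq_pow (M : Type*) [Monoid M] [Finite M] :
    ∃ m k : ℕ, k ≠ 0 ∧ ∀ x : M, x ^ (m + k) = x ^ m := by
  obtain ⟨m, n, hmn, h⟩ := Finite.exists_ne_map_eq_of_infinite fun (n : ℕ) (x : M) => x ^ n
  wlog hlt : m < n generalizing m n
  · exact this n m hmn.symm h.symm (lt_of_le_of_ne (not_lt.mp hlt) hmn.symm)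
  · refine ⟨m, n - m, Nat.sub_ne_zero_of_lt hlt, fun x => ?_⟩
    rw [Nat.add_sub_cancel' hlt.le]
    exact (congrFun h x).symm

theorem mk_submonoid_mem_AESl {Q : Type} [Finite Q] {M : Submonoid (Q ≃. Q)}
    (hM : ∀ g ∈ M, CycleFree g) : FinSgp.mk M ∈ AESl := by
  obtain ⟨m, k, hk, hpow⟩ := exists_forall_pow_add_eq_pow M
  have hsucc : ∀ x : M, x ^ (m + 1) = x ^ m := fun x =>
    Subtype.ext ((hM x x.2).pow_succ_eq hk (congrArg Subtype.val (hpow x)))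
  refine ⟨⟨m, fun (x : M) => ?_⟩, fun (d e : M) hd he => ?_⟩
  · change spow x (m + 1) = spow x m
    rw [spow_eq_pow, spow_eq_pow, pow_succ, hsucc, ← pow_succ, hsucc]
  · exact Subtype.ext
      (pequiv_commute_of_isIdempotentElem (congrArg Subtype.val hd) (congrArg Subtype.val he))

/-- The partial bijection of `Q × J` that acts on the fibre over `j` by `g j` and translates
the base by `l`. -/
def skewProduct [AddGroup J] (g : J → Q ≃. Q) (l : J) : Q × J ≃. Q × J where
  toFun x := (g x.2 x.1).map (·, x.2 + l)
  invFun y := ((g (y.2 - l)).symm y.1).map (·, y.2 - l)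
  inv := by
    rintro ⟨q, j⟩ ⟨r, i⟩
    simp only [Option.map_eq_some_iff, Prod.mk.injEq]
    constructor
    · rintro ⟨_, hs, rfl, rfl⟩
      exact ⟨r, (PEquiv.eq_some_iff _).mp hs, rfl, sub_add_cancel _ _⟩
    · rintro ⟨_, hs, rfl, rfl⟩
      exact ⟨q, by rwa [add_sub_cancel_right, PEquiv.eq_some_iff], rfl, add_sub_cancel_right _ _⟩

namespace skewProduct

variable [AddGroup J]

theorem apply_mk (g : J → Q ≃. Q) (l : J) (q : Q) (j : J) :
    skewProduct g l (q, j) = (g j q).map (·, j + l) := rfl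

theorem mul (g h : J → Q ≃. Q) (l m : J) :
    skewProduct g l * skewProduct h m = skewProduct (fun j => g j * h (j + l)) (l + m) := by
  refine PEquiv.ext fun ⟨q, j⟩ => ?_
  rw [pequiv_mul_apply, apply_mk, apply_mk, pequiv_mul_apply]
  cases g j q with
  | none => rfl
  | some r => rw [Option.map_some, Option.bind_some, apply_mk, Option.bind_some, add_assoc]

theorem one_zero : skewProduct (1 : J → Q ≃. Q) 0 = 1 :=
  PEquiv.ext fun ⟨q, j⟩ => by simp [apply_mk, pequiv_one_apply]

theorem pow_zero_shift (g : J → Q ≃. Q) (n : ℕ) :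
    skewProduct g 0 ^ n = skewProduct (g ^ n) 0 := by
  induction n with
  | zero => rw [pow_zero, pow_zero, one_zero]
  | succ n ih =>
    rw [pow_succ, ih, mul, pow_succ]
    simp only [add_zero]
    rfl

theorem cycleFree {g : J → Q ≃. Q} (hg : ∀ j, CycleFree (g j)) :
    CycleFree (skewProduct g 0) := by
  rintro ⟨q, j⟩ k hk h
  rw [pow_zero_shift, apply_mk, Option.map_eq_some_iff] at h
  obtain ⟨r, hr, hrq⟩ := h
  obtain rfl : r = q := congrArg Prod.fst hrq
  rw [apply_mk, hg j r k hk hr, Option.map_some, add_zero]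

theorem pow_apply_snd {g : J → Q ≃. Q} {l : J} {x y : Q × J} (n : ℕ)
    (h : (skewProduct g l ^ n) x = some y) : y.2 = x.2 + n • l := by
  induction n generalizing y with
  | zero =>
    obtain rfl : x = y := Option.some.inj h
    rw [zero_nsmul, add_zero]
  | succ n ih =>
    rw [pow_succ, pequiv_mul_apply, Option.bind_eq_some_iff] at h
    obtain ⟨z, hz, hzy⟩ := h
    obtain ⟨r, -, rfl⟩ := Option.map_eq_some_iff.mp hzy
    rw [ih hz, succ_nsmul, add_assoc]

theorem fibre_ne_zero_of_cycle {g : J → Q ≃. Q} {l : J} {x : Q × J} {k : ℕ} (hk : k ≠ 0)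
    (h : (skewProduct g l ^ k) x = some x) (n : ℕ) : g (x.2 + n • l) ≠ 0 := fun hzero => by
  obtain ⟨y, hy⟩ := Option.ne_none_iff_exists'.mp (pequiv_pow_apply_ne_none hk h n)
  refine pequiv_pow_apply_ne_none hk h (n + 1) ?_
  have hnone : skewProduct g l (y.1, y.2) = none := by
    rw [apply_mk, pow_apply_snd n hy, hzero, pequiv_zero_apply, Option.map_none]
  rw [pow_succ, pequiv_mul_apply, hy, Option.bind_some, hnone]

end skewProduct

end PartialBijections

/-- A finite automaton whose letters act by partial bijections of the states, with a
distinguished state serving as both initial and terminal state. -/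
structure BideterministicAutomaton (α : Type*) where
  State : Type
  [finite : Finite State]
  init : State
  step : α → State ≃. State

namespace BideterministicAutomaton

open FreeMonoid

attribute [instance] BideterministicAutomaton.finite

variable {α : Type*} (A : BideterministicAutomaton α)

/-- The partial bijection of the states induced by a word, read from left to right. -/
def act : FreeMonoid α →* (A.State ≃. A.State) := lift A.step

theorem act_of (c : α) : A.act (of c) = A.step c := lift_eval_of _ _

/-- The monoid of partial bijections induced by words, with the empty map adjoined. -/
def transitionMonoid : Submonoid (A.State ≃. A.State) where
  carrier := {g | g = 0 ∨ ∃ w, A.act w = g}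
  one_mem' := Or.inr ⟨1, map_one _⟩
  mul_mem' := by
    rintro _ _ (rfl | ⟨v, rfl⟩) (rfl | ⟨w, rfl⟩)
    · exact Or.inl (zero_mul _)
    · exact Or.inl (zero_mul _)
    · exact Or.inl (mul_zero _)
    · exact Or.inr ⟨v * w, map_mul _ _ _⟩

theorem act_mem_transitionMonoid (w : FreeMonoid α) : A.act w ∈ A.transitionMonoid :=
  Or.inr ⟨w, rfl⟩

/-- An automaton is aperiodic if no word permutes states along a cycle of length at least two. -/
def IsAperiodic : Prop := ∀ w, CycleFree (A.act w)

variable {A} in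
theorem IsAperiodic.cycleFree_of_mem (hA : A.IsAperiodic) {g : A.State ≃. A.State}
    (hg : g ∈ A.transitionMonoid) : CycleFree g := by
  rcases hg with rfl | ⟨w, rfl⟩
  · exact cycleFree_zero
  · exact hA w

/-- The substitution `c ↦ a c b`. -/
def surround (a b : α) : FreeMonoid α →* FreeMonoid α := lift fun c => of a * of c * of b

theorem surround_of_mul (a b c : α) (w : FreeMonoid α) :
    surround a b (of c * w) = of a * (of c * (of b * surround a b w)) := by
  rw [map_mul, surround, lift_eval_of, mul_assoc, mul_assoc]

theorem surround_ne_one (a b : α) {w : FreeMonoid α} (hw : w ≠ 1) : surround a b w ≠ 1 := by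
  cases w using FreeMonoid.casesOn with
  | one => exact absurd rfl hw
  | of_mul c w =>
    rw [surround_of_mul]
    exact List.cons_ne_nil _ _

section Extend

variable [DecidableEq α]

/-- The action of the letter `c` on the fibre over position `j` of the paths `a c b`: at
position `1` the letter acts as in `A`, and the markers `a` and `b` are read at positions
`0` and `2`. -/
def fibreStep (a b c : α) (j : ZMod 3) : A.State ≃. A.State :=
  if j = 0 then if c = a then 1 else 0
  else if j = 1 then A.step c
  else if c = b then 1 else 0

/-- The automaton in which each edge of `A` labelled `c` is replaced by a path labelled
`a c b`; a state `(q, j)` is the position `j` on such a path that starts at `q` if `j ≤ 1` and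
ends at `q` if `j = 2`. -/
abbrev extend (a b : α) : BideterministicAutomaton α where
  State := A.State × ZMod 3
  init := (A.init, 0)
  step c := skewProduct (A.fibreStep a b c) 1

theorem fibreStep_zero (a b c : α) : A.fibreStep a b c 0 = if c = a then 1 else 0 := rfl

theorem fibreStep_one (a b c : α) : A.fibreStep a b c 1 = A.step c := rfl

theorem fibreStep_two (a b c : α) : A.fibreStep a b c 2 = if c = b then 1 else 0 := rfl

theorem fibreStep_mem_transitionMonoid (a b c : α) (j : ZMod 3) :
    A.fibreStep a b c j ∈ A.transitionMonoid := by
  unfold fibreStep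
  split_ifs
  · exact one_mem _
  · exact Or.inl rfl
  · exact A.act_of c ▸ A.act_mem_transitionMonoid _
  · exact one_mem _
  · exact Or.inl rfl

theorem extend_act_of (a b c : α) :
    (A.extend a b).act (of c) = skewProduct (A.fibreStep a b c) 1 :=
  act_of _ c

theorem exists_extend_act_eq_skewProduct (a b : α) (w : FreeMonoid α) :
    ∃ (g : ZMod 3 → A.State ≃. A.State) (l : ZMod 3), (∀ j, g j ∈ A.transitionMonoid) ∧
      (A.extend a b).act w = skewProduct g l := by
  induction w using FreeMonoid.inductionOn' with
  | one => exact ⟨1, 0, fun _ => one_mem _, by rw [map_one, skewProduct.one_zero]⟩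
  | of_mul c w ih =>
    obtain ⟨g, l, hg, hw⟩ := ih
    refine ⟨fun j => A.fibreStep a b c j * g (j + 1), 1 + l,
      fun j => mul_mem (A.fibreStep_mem_transitionMonoid a b c j) (hg _), ?_⟩
    rw [map_mul, extend_act_of, hw]
    exact skewProduct.mul _ _ _ _

variable {A} in
theorem IsAperiodic.extend (hA : A.IsAperiodic) {a b : α} (hab : a ≠ b) :
    (A.extend a b).IsAperiodic := fun w => by
  cases w using FreeMonoid.casesOn with
  | one => exact cycleFree_one
  | of_mul c w =>
    obtain ⟨g, l, hg, hw⟩ := A.exists_extend_act_eq_skewProduct a b w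
    have hcw : (A.extend a b).act (of c * w) =
        skewProduct (fun j => A.fibreStep a b c j * g (j + 1)) (1 + l) := by
      rw [map_mul, extend_act_of, hw]
      exact skewProduct.mul _ _ _ _
    rw [hcw]
    rcases eq_or_ne (1 + l) 0 with hl | hl
    · rw [hl]
      exact skewProduct.cycleFree fun j => hA.cycleFree_of_mem
        (mul_mem (A.fibreStep_mem_transitionMonoid a b c j) (hg _))
    · intro x k hk hcycle
      have hread : ∀ j, A.fibreStep a b c j ≠ 0 := fun j => by
        obtain ⟨n, rfl⟩ := exists_add_nsmul_eq hl x.2 j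
        exact left_ne_zero_of_mul (skewProduct.fibre_ne_zero_of_cycle hk hcycle n)
      have hca : c = a := not_not.mp fun h => hread 0 (by rw [fibreStep_zero, if_neg h])
      have hcb : c = b := not_not.mp fun h => hread 2 (by rw [fibreStep_two, if_neg h])
      exact absurd (hca.symm.trans hcb) hab

theorem extend_act_surround (a b : α) (w : FreeMonoid α) (q : A.State) :
    (A.extend a b).act (surround a b w) (q, 0) = (A.act w q).map (·, 0) := by
  induction w using FreeMonoid.inductionOn' generalizing q with
  | one => rfl
  | of_mul c w ih =>
    have hblock : (A.extend a b).act (of a * of c * of b) =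
        skewProduct (fun j => A.fibreStep a b a j * A.fibreStep a b c (j + 1) *
          A.fibreStep a b b (j + (1 + 1))) (1 + 1 + 1) := by
      rw [map_mul, map_mul, extend_act_of, extend_act_of, extend_act_of]
      exact (congrArg (· * _) (skewProduct.mul _ _ _ _)).trans (skewProduct.mul _ _ _ _)
    have hfibre : A.fibreStep a b a 0 * A.fibreStep a b c 1 * A.fibreStep a b b 2 = A.step c := by
      rw [fibreStep_zero, if_pos rfl, fibreStep_one, fibreStep_two, if_pos rfl, one_mul, mul_one]
    have hblock_apply : (A.extend a b).act (of a * of c * of b) (q, 0) =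
        (A.step c q).map (·, 0) := by
      rw [hblock]
      exact congrArg (fun g : A.State ≃. A.State => (g q).map (·, (0 : ZMod 3))) hfibre
    rw [surround_of_mul, ← mul_assoc, ← mul_assoc, map_mul, pequiv_mul_apply, hblock_apply,
      map_mul, act_of, pequiv_mul_apply]
    cases A.step c q with
    | none => rfl
    | some r => exact ih r

theorem extend_act_surround_eq_none {a a' : α} (ha : a' ≠ a) (b b' : α) {w : FreeMonoid α}
    (hw : w ≠ 1) (q : A.State) : (A.extend a b).act (surround a' b' w) (q, 0) = none := by
  cases w using FreeMonoid.casesOn with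
  | one => exact absurd rfl hw
  | of_mul c w =>
    have hfirst : (A.extend a b).act (of a') (q, 0) = none := by
      rw [extend_act_of]
      change (A.fibreStep a b a' 0 q).map _ = none
      rw [fibreStep_zero, if_neg ha]
      rfl
    rw [surround_of_mul, map_mul, pequiv_mul_apply, hfirst, Option.bind_none]

end Extend

/-- The one-state automaton in which both letters are loops. -/
def loops : BideterministicAutomaton Bool where
  State := Unit
  init := ()
  step _ := 1

theorem loops_act (w : FreeMonoid Bool) : loops.act w = 1 :=
  DFunLike.congr_fun (hom_eq fun c => loops.act_of c : loops.act = 1) w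

/-- The automaton obtained from `loops` by iterated extension; the head of the list of choices is
the last extension. -/
def tower : List Bool → BideterministicAutomaton Bool
  | [] => loops
  | i :: p => (tower p).extend i (!i)

/-- The image of the letter `true` under the iterated substitutions `c ↦ i c (!i)`; the head of
the list of choices is the last substitution. -/
def iterSurround : List Bool → FreeMonoid Bool
  | [] => of true
  | i :: p => surround i (!i) (iterSurround p)

theorem tower_isAperiodic (p : List Bool) : (tower p).IsAperiodic := by
  induction p with
  | nil => exact fun w => (loops_act w).symm ▸ cycleFree_one
  | cons i p ih => exact ih.extend (Bool.not_ne_self i).symm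

theorem iterSurround_ne_one (p : List Bool) : iterSurround p ≠ 1 := by
  induction p with
  | nil => exact of_ne_one _
  | cons i p ih => exact surround_ne_one i (!i) ih

theorem tower_act_iterSurround (p r : List Bool) :
    (tower p).act (iterSurround (p ++ r)) (tower p).init = some (tower p).init := by
  induction p with
  | nil => exact congrArg (fun g : Unit ≃. Unit => g ()) (loops_act _)
  | cons i p ih =>
    exact (extend_act_surround _ i (!i) _ _).trans (congrArg (Option.map (·, (0 : ZMod 3))) ih)

theorem tower_act_iterSurround_eq_none (p r : List Bool) {i i' : Bool} (hi : i' ≠ i) :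
    (tower (p ++ [i])).act (iterSurround (p ++ i' :: r)) (tower (p ++ [i])).init = none := by
  induction p with
  | nil => exact extend_act_surround_eq_none _ hi _ _ (iterSurround_ne_one r) _
  | cons j p ih =>
    exact (extend_act_surround _ j (!j) _ _).trans (congrArg (Option.map (·, (0 : ZMod 3))) ih)

/-- The transition monoid of `tower p` as a bundled finite semigroup. -/
def towerSgp (p : List Bool) : FinSgp := FinSgp.mk (tower p).transitionMonoid

theorem towerSgp_mem_AESl (p : List Bool) : towerSgp p ∈ AESl :=
  mk_submonoid_mem_AESl fun _ => (tower_isAperiodic p).cycleFree_of_mem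

/-- The diagonal action of words on all automata `tower p`. -/
def diag : FreeMonoid Bool →ₙ* ∀ p, (towerSgp p).carrier where
  toFun w p := (⟨(tower p).act w, (tower p).act_mem_transitionMonoid w⟩ :
    (tower p).transitionMonoid)
  map_mul' v w := funext fun p => Subtype.ext (map_mul (tower p).act v w)

/-- The closed semigroup generated by the diagonal actions of the two letters. -/
def towerLimit : Subsemigroup (∀ p, (towerSgp p).carrier) :=
  (Subsemigroup.closure {diag (of true), diag (of false)}).topologicalClosure

theorem diag_mem_towerLimit {w : FreeMonoid Bool} (hw : w ≠ 1) : diag w ∈ towerLimit := by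
  have hletter : ∀ c, diag (of c) ∈ towerLimit := fun c =>
    Subsemigroup.le_topologicalClosure _ (Subsemigroup.subset_closure (by cases c <;> simp))
  induction w using FreeMonoid.inductionOn' with
  | one => exact absurd rfl hw
  | of_mul c w ih =>
    rcases eq_or_ne w 1 with rfl | hw'
    · exact hletter c
    · rw [map_mul]
      exact mul_mem (hletter c) (ih hw')

instance : CompactSpace towerLimit :=
  isCompact_iff_compactSpace.mp (Subsemigroup.isClosed_topologicalClosure _).isCompact

theorem towerLimit_isProV : IsProV AESl towerLimit :=
  isProV_of_isClosed (fun _ hS _ => mem_AESl_of_injective hS) towerSgp_mem_AESl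
    (Subsemigroup.isClosed_topologicalClosure _)

/-- The element of `towerLimit` represented by a letter. -/
def letter (c : Bool) : towerLimit := ⟨diag (of c), diag_mem_towerLimit (of_ne_one c)⟩

theorem topGen_letters : TopGen towerLimit {letter true, letter false} := by
  have hpreimage : ({letter true, letter false} : Set towerLimit) =
      Subtype.val ⁻¹' {diag (of true), diag (of false)} :=
    Set.ext fun _ => or_congr Subtype.ext_iff Subtype.ext_iff
  rw [hpreimage]
  exact topGen_topologicalClosure _

/-- The partial action of an element of `towerLimit` on the states of `tower p`. -/
def limitAct (p : List Bool) (x : towerLimit) : (tower p).State ≃. (tower p).State :=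
  (x.1 p : (tower p).transitionMonoid).1

theorem isClosed_setOf_limitAct (p : List Bool)
    (P : ((tower p).State ≃. (tower p).State) → Prop) : IsClosed {x | P (limitAct p x)} := by
  have hproj : Continuous fun x : towerLimit => x.1 p :=
    (continuous_apply p).comp continuous_subtype_val
  exact (isClosed_discrete {z : (towerSgp p).carrier |
    P (z : (tower p).transitionMonoid).1}).preimage hproj

theorem letter_true_ne_letter_false : letter true ≠ letter false := fun h => by
  have hnone : (tower [true]).act (of false) (tower [true]).init = none := rfl
  have hact : (tower [true]).act (of true) = (tower [true]).act (of false) :=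
    congrArg (limitAct [true]) h
  rw [← hact] at hnone
  cases hnone

/-- The closure in `towerLimit` of the set of iterated substitutions whose choices begin
with `p`. -/
def cylinder (p : List Bool) : Set towerLimit :=
  closure (Set.range fun r =>
    ⟨diag (iterSurround (p ++ r)), diag_mem_towerLimit (iterSurround_ne_one _)⟩)

theorem cylinder_append_subset (p r : List Bool) : cylinder (p ++ r) ⊆ cylinder p :=
  closure_mono (by
    rintro _ ⟨s, rfl⟩
    exact ⟨r ++ s, by simp only [List.append_assoc]⟩)

theorem disjoint_cylinder (p : List Bool) {i i' : Bool} (hi : i ≠ i') :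
    Disjoint (cylinder (p ++ [i])) (cylinder (p ++ [i'])) := by
  have hmem : cylinder (p ++ [i]) ⊆
      {x | limitAct (p ++ [i]) x (tower (p ++ [i])).init = some (tower (p ++ [i])).init} :=
    closure_minimal (Set.range_subset_iff.mpr fun r => tower_act_iterSurround (p ++ [i]) r)
      (isClosed_setOf_limitAct (p ++ [i]) fun g => g _ = some _)
  have hmem' : cylinder (p ++ [i']) ⊆
      {x | limitAct (p ++ [i]) x (tower (p ++ [i])).init = none} :=
    closure_minimal (Set.range_subset_iff.mpr fun r => by
        have hnone := tower_act_iterSurround_eq_none p r hi.symm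
        rw [List.append_cons p i' r] at hnone
        exact hnone)
      (isClosed_setOf_limitAct (p ++ [i]) fun g => g _ = none)
  refine Set.disjoint_left.mpr fun x hx hx' => ?_
  exact Option.some_ne_none _ ((hmem hx).symm.trans (hmem' hx'))

theorem not_countable_towerLimit : ¬ Countable towerLimit :=
  -- A Cantor scheme lists the choices of a branch with the latest one first, hence the reversal.
  not_countable_of_cantorScheme (A := fun l => cylinder l.reverse) (fun _ => isClosed_closure)
    (fun _ => (Set.range_nonempty _).closure)
    (fun l i => by
      simpa only [List.reverse_cons] using cylinder_append_subset l.reverse [i])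
    (fun l i i' hi => by
      simpa only [List.reverse_cons] using disjoint_cylinder l.reverse hi)

end BideterministicAutomaton

/-- The pseudovariety `A ∩ ESl` of finite aperiodic semigroups with
commuting idempotents is not locally countable: there is an uncountable
pro-(A ∩ ESl) semigroup topologically generated by a two-element subset. -/
theorem AESl_not_locallyCountable :
    ¬ PVLocallyCountable AESl ∧
      ∃ S : TopSgp, IsProV AESl S.carrier ∧ ¬ Countable S.carrier ∧
        ∃ x y : S.carrier, x ≠ y ∧ TopGen S.carrier {x, y} := by
  have hpro := BideterministicAutomaton.towerLimit_isProV
  have hunc := BideterministicAutomaton.not_countable_towerLimit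
  have hgen := BideterministicAutomaton.topGen_letters
  exact ⟨not_pvLocallyCountable hpro hunc (Set.toFinite _) hgen,
    TopSgp.mk BideterministicAutomaton.towerLimit, hpro, hunc, _, _,
    BideterministicAutomaton.letter_true_ne_letter_false, hgen⟩
end
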